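/- Fix an integer m ≥ 1 and set d = 2m. There exists a finitely supported probability mass function μ on instances whose items have weight vectors lying in [0,1]^d, such that: (i) every list l in the support of μ satisfies OPT(l) ≥ m = d/2; and (ii) for every deterministic online algorithm with free disposal A, the expectation ∑' l, μ(l) · |A(l)| ≤ 2. (By Yao's principle this shows that no randomized algorithm for online vector packing without slack has competitive ratio o(d), and since the constructed weight vectors have sparsity k = d, no competitive ratio o(k), even for the utility function f(S) = |S|.) -/

import Mathlib

open scoped BigOperators ENNReal

/-- The weight of the item at position `p` of the list `l` on dimension `i`
(zero if `p` is out of range). -/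
def weightAt {Item : Type*} {d : ℕ} (w : Item → Fin d → ℝ) (l : List Item)
    (p : ℕ) (i : Fin d) : ℝ :=
  (l[p]?.map fun u => w u i).getD 0

/-- A finite set of positions `P` is feasible for the instance `l` if all positions are
valid indices and on every dimension the total weight is at most `1`. -/
def Feasible {Item : Type*} {d : ℕ} (w : Item → Fin d → ℝ) (l : List Item)
    (P : Finset ℕ) : Prop :=
  (∀ p ∈ P, p < l.length) ∧ ∀ i : Fin d, ∑ p ∈ P, weightAt w l p i ≤ 1

/-- `OPT w l` is the maximum cardinality of a feasible set of positions for `l`. -/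
noncomputable def OPT {Item : Type*} {d : ℕ} (w : Item → Fin d → ℝ) (l : List Item) : ℕ :=
  sSup {n | ∃ P : Finset ℕ, Feasible w l P ∧ P.card = n}

/-- A deterministic online algorithm with free disposal. -/
structure OnlineAlg {Item : Type*} {d : ℕ} (w : Item → Fin d → ℝ) where
  A : List Item → Finset ℕ
  online : ∀ (l : List Item) (u : Item), A (l ++ [u]) ⊆ A l ∪ {l.length}
  feasible : ∀ l : List Item, Feasible w l (A l)

/-! In each of `m` phases, `n` big items arrive, the candidates of the phase, each filling more than
half of the two dimensions of its phase, so that only one of them can be kept. One of them, chosen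
uniformly at random and hidden from the algorithm, is good. The room left by the candidates
decreases geometrically in their order of arrival on one of the two dimensions and increases on the
other. Each later item takes `1 / m` of the room left by the good candidate, so the good items of
all phases fit together, whereas any other candidate blocks all later items on one of the two
dimensions. Since the choice has no influence on the input before its phase is over, an online
algorithm keeps the good item of a phase with probability at most `1 / n`; besides good items it
holds at most one item, from the last phase it serves. -/

section Packing

variable {Item : Type*} {d : ℕ} {w : Item → Fin d → ℝ} {l l₁ l₂ : List Item} {P : Finset ℕ}

lemma weightAt_append_left {p : ℕ} (hp : p < l₁.length) (i : Fin d) :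
    weightAt w (l₁ ++ l₂) p i = weightAt w l₁ p i := by
  rw [weightAt, weightAt, List.getElem?_append_left hp]

lemma Feasible.of_isPrefix (hP : Feasible w l₁ P) (h : l₁ <+: l₂) : Feasible w l₂ P := by
  obtain ⟨r, rfl⟩ := h
  refine ⟨fun p hp ↦ (hP.1 p hp).trans_le (by simp), fun i ↦ ?_⟩
  rw [Finset.sum_congr rfl fun p hp ↦ weightAt_append_left (hP.1 p hp) i]
  exact hP.2 i

lemma Feasible.card_le_OPT (hP : Feasible w l P) : P.card ≤ OPT w l := by
  refine le_csSup ⟨l.length, ?_⟩ ⟨P, hP, rfl⟩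
  rintro _ ⟨Q, hQ, rfl⟩
  have hsub : Q ⊆ Finset.range l.length := fun p hp ↦ Finset.mem_range.2 (hQ.1 p hp)
  simpa only [Finset.card_range] using Finset.card_le_card hsub

lemma OnlineAlg.mem_of_isPrefix (alg : OnlineAlg w) (h : l₁ <+: l₂) {p : ℕ}
    (hp : p < l₁.length) (hmem : p ∈ alg.A l₂) : p ∈ alg.A l₁ := by
  obtain ⟨r, rfl⟩ := h
  induction r using List.reverseRecOn with
  | nil => simpa only [List.append_nil] using hmem
  | append_singleton r u ih =>
    rw [← List.append_assoc] at hmem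
    rcases Finset.mem_union.1 (alg.online _ _ hmem) with hold | hnew
    · exact ih hold
    · rw [Finset.mem_singleton, List.length_append] at hnew
      omega

end Packing

lemma card_mul_card_le_card_pi {ι : Type*} {α : ι → Type*} [Fintype ι] [DecidableEq ι]
    [∀ i, Fintype (α i)] (B : Finset (∀ i, α i)) (j : ι)
    (hB : ∀ f ∈ B, ∀ g ∈ B, (∀ i ≠ j, f i = g i) → f j = g j) :
    B.card * Fintype.card (α j) ≤ Fintype.card (∀ i, α i) := by
  rw [← Finset.card_univ (α := α j), ← Finset.card_product]
  refine Finset.card_le_card_of_injOn (t := Finset.univ)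
    (fun x ↦ Function.update x.1 j x.2) (fun _ _ ↦ Finset.mem_univ _) ?_
  rintro ⟨f, a⟩ hf ⟨g, b⟩ hg hupd
  have hoff : ∀ i ≠ j, f i = g i := fun i hi ↦ by
    simpa only [Function.update_of_ne hi] using congrFun hupd i
  have hj : f j = g j :=
    hB f (Finset.mem_product.1 hf).1 g (Finset.mem_product.1 hg).1 hoff
  have hab : a = b := by simpa only [Function.update_self] using congrFun hupd j
  have hfg : f = g := funext fun i ↦ by
    by_cases hi : i = j
    · exact hi ▸ hj
    · exact hoff i hi
  rw [hfg, hab]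

lemma tsum_map_mul {α β : Type*} (μ : PMF α) (f : α → β) (g : β → ℝ≥0∞) :
    ∑' b, μ.map f b * g b = ∑' a, μ a * g (f a) := by
  classical
  simp only [PMF.map_apply, ← ENNReal.tsum_mul_right]
  rw [ENNReal.tsum_comm]
  refine tsum_congr fun a ↦ ?_
  rw [tsum_eq_single (f a) fun b hb ↦ by rw [if_neg hb, zero_mul], if_pos rfl]

lemma tsum_uniformOfFintype_mul {α : Type*} [Fintype α] [Nonempty α] (g : α → ℝ≥0∞) :
    ∑' a, PMF.uniformOfFintype α a * g a = (∑ a, g a) / Fintype.card α := by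
  simp only [tsum_fintype, PMF.uniformOfFintype_apply]
  rw [← Finset.mul_sum, mul_comm, div_eq_mul_inv]

/-- The room which candidate `k` leaves on side `s` of its phase: a power of `1 / (m + 3)` that
decreases with `k` on side `0` and increases with `k` on side `1`. The base is small enough that
two candidates of the same phase do not fit together, and that on each side `m` times the room left
by a candidate is less than the room left by any candidate that leaves more. -/
noncomputable def slack (m : ℕ) {n : ℕ} (s : Fin 2) (k : Fin n) : ℝ :=
  ((m : ℝ) + 3)⁻¹ ^ ((![k, k.rev] s : ℕ) + 1)

section Slack

variable (m : ℕ) {n : ℕ} (s : Fin 2) (k : Fin n)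

lemma slack_pos : 0 < slack m s k := by
  unfold slack
  positivity

lemma slack_lt_half : slack m s k < 1 / 2 := by
  have hbase : ((m : ℝ) + 3)⁻¹ < 1 / 2 := by
    rw [one_div]
    exact inv_strictAnti₀ two_pos (by linarith [m.cast_nonneg (α := ℝ)])
  exact (pow_le_of_le_one (by positivity) (by linarith) (Nat.succ_ne_zero _)).trans_lt hbase

variable {s k} in
lemma mul_slack_lt_slack {k' : Fin n} (h : ![k, k.rev] s < ![k', k'.rev] s) :
    m * slack m s k' < slack m s k := by
  have hm : (m : ℝ) < m + 3 := by linarith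
  have hbase : ((m : ℝ) + 3)⁻¹ ≤ 1 := inv_le_one_of_one_le₀ (by linarith [m.cast_nonneg (α := ℝ)])
  have hpow : slack m s k' ≤ slack m s k * ((m : ℝ) + 3)⁻¹ := by
    rw [slack, slack, ← pow_succ]
    exact pow_le_pow_of_le_one (by positivity) hbase (Nat.succ_le_succ h)
  calc m * slack m s k' ≤ m * (slack m s k * ((m : ℝ) + 3)⁻¹) := by gcongr
    _ = slack m s k * (m / (m + 3)) := by ring
    _ < slack m s k :=
      mul_lt_of_lt_one_right (slack_pos m s k) ((div_lt_one (by positivity)).2 hm)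

variable {k} in
lemma exists_mul_slack_lt_slack {k' : Fin n} (h : k ≠ k') :
    ∃ s, m * slack m s k' < slack m s k := by
  rcases h.lt_or_gt with hlt | hgt
  · exact ⟨0, mul_slack_lt_slack m (by simpa using hlt)⟩
  · exact ⟨1, mul_slack_lt_slack m (by simpa using hgt)⟩

end Slack

section HardInstance

variable {m n : ℕ} {K K' : Fin m → Fin n}

/-- The weight of candidate `x.2` of phase `x.1` on side `s` of phase `t`, when `K` selects the good
candidates. -/
noncomputable def hardWeight (K : Fin m → Fin n) (x : Fin m × Fin n) (s : Fin 2) (t : Fin m) : ℝ :=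
  if t = x.1 then 1 - slack m s x.2 else if t < x.1 then slack m s (K t) / m else 0

lemma hardWeight_nonneg (x : Fin m × Fin n) (s : Fin 2) (t : Fin m) :
    0 ≤ hardWeight K x s t := by
  unfold hardWeight
  split_ifs
  · linarith [slack_lt_half m s x.2]
  · exact div_nonneg (slack_pos m s (K t)).le m.cast_nonneg
  · exact le_rfl

lemma hardWeight_le_one (x : Fin m × Fin n) (s : Fin 2) (t : Fin m) : hardWeight K x s t ≤ 1 := by
  unfold hardWeight
  split_ifs
  · linarith [slack_pos m s x.2]
  · have hm : (1 : ℝ) ≤ m := Nat.one_le_cast.2 t.pos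
    exact div_le_one_of_le₀ (by linarith [slack_lt_half m s (K t)]) m.cast_nonneg
  · exact zero_le_one

/-- A set of (phase, candidate) pairs whose items respect the capacity on both sides of every
phase. -/
def IsPacking (K : Fin m → Fin n) (Q : Finset (Fin m × Fin n)) : Prop :=
  ∀ s t, ∑ x ∈ Q, hardWeight K x s t ≤ 1

namespace IsPacking

variable {Q : Finset (Fin m × Fin n)} {x y : Fin m × Fin n}

lemma hardWeight_add_le_one (hQ : IsPacking K Q) (hx : x ∈ Q) (hy : y ∈ Q) (hxy : x ≠ y)
    (s : Fin 2) (t : Fin m) : hardWeight K x s t + hardWeight K y s t ≤ 1 :=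
  (Finset.add_le_sum (fun z _ ↦ hardWeight_nonneg z s t) hx hy hxy).trans (hQ s t)

lemma eq_of_phase_eq (hQ : IsPacking K Q) (hx : x ∈ Q) (hy : y ∈ Q) (hphase : x.1 = y.1) :
    x = y := by
  by_contra hxy
  have hsum := hQ.hardWeight_add_le_one hx hy hxy 0 x.1
  rw [hardWeight, hardWeight, if_pos rfl, if_pos hphase] at hsum
  linarith [slack_lt_half m 0 x.2, slack_lt_half m 0 y.2]

lemma eq_good_of_phase_lt (hQ : IsPacking K Q) (hx : x ∈ Q) (hy : y ∈ Q) (hphase : x.1 < y.1) :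
    x.2 = K x.1 := by
  by_contra hbad
  obtain ⟨s, hs⟩ := exists_mul_slack_lt_slack m (Ne.symm hbad)
  have hsum := hQ.hardWeight_add_le_one hx hy (fun h ↦ hphase.ne (congrArg Prod.fst h)) s x.1
  rw [hardWeight, hardWeight, if_pos rfl, if_neg hphase.ne, if_pos hphase] at hsum
  have hm : (0 : ℝ) < m := Nat.cast_pos.2 x.1.pos
  have hblocked : slack m s x.2 < slack m s (K x.1) / m := by
    rwa [lt_div_iff₀' hm]
  linarith

lemma card_le (hQ : IsPacking K Q) :
    Q.card ≤ 1 + (Finset.univ.filter fun t ↦ (t, K t) ∈ Q).card := by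
  rcases Q.eq_empty_or_nonempty with rfl | hne
  · simp
  obtain ⟨y, hy, hlast⟩ := Q.exists_max_image Prod.fst hne
  have hgood : Q.erase y ⊆
      (Finset.univ.filter fun t ↦ (t, K t) ∈ Q).image fun t ↦ (t, K t) := by
    intro x hx
    obtain ⟨hxy, hx⟩ := Finset.mem_erase.1 hx
    have hlt : x.1 < y.1 := (hlast x hx).lt_of_ne fun h ↦ hxy (hQ.eq_of_phase_eq hx hy h)
    have hx_eq : (x.1, K x.1) = x := Prod.ext rfl (hQ.eq_good_of_phase_lt hx hy hlt).symm
    exact Finset.mem_image.2 ⟨x.1, by simpa [hx_eq] using hx, hx_eq⟩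
  have hcard := (Finset.card_le_card hgood).trans Finset.card_image_le
  rw [Finset.card_erase_of_mem hy] at hcard
  omega

end IsPacking

/-- The set of the good items of all phases. -/
def goodItems (K : Fin m → Fin n) : Finset (Fin m × Fin n) :=
  Finset.univ.map ⟨fun t ↦ (t, K t), fun _ _ h ↦ congrArg Prod.fst h⟩

lemma card_goodItems : (goodItems K).card = m := by
  rw [goodItems, Finset.card_map, Finset.card_univ, Fintype.card_fin]

lemma isPacking_goodItems : IsPacking K (goodItems K) := by
  intro s t
  have hm : (m : ℝ) ≠ 0 := Nat.cast_ne_zero.2 t.pos.ne'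
  have hslack := slack_pos m s (K t)
  have hterm (t' : Fin m) : hardWeight K (t', K t') s t ≤
      slack m s (K t) / m + if t = t' then 1 - slack m s (K t) else 0 := by
    have : 0 ≤ slack m s (K t) / m := by positivity
    unfold hardWeight
    split_ifs with heq hlt
    · subst heq
      linarith
    all_goals linarith
  calc ∑ x ∈ goodItems K, hardWeight K x s t
      = ∑ t', hardWeight K (t', K t') s t := by rw [goodItems, Finset.sum_map]; rfl
    _ ≤ ∑ t', (slack m s (K t) / m + if t = t' then 1 - slack m s (K t) else 0) :=
      Finset.sum_le_sum fun t' _ ↦ hterm t'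
    _ = 1 := by
      rw [Finset.sum_add_distrib, Finset.sum_ite_eq, if_pos (Finset.mem_univ t), Finset.sum_const,
        Finset.card_univ, Fintype.card_fin, nsmul_eq_mul, mul_div_cancel₀ _ hm]
      ring

/-- The weight vector of an item; the dimension `i` stands for side `i / m` of phase `i % m`. -/
noncomputable def hardItem (K : Fin m → Fin n) (x : Fin m × Fin n) : Fin (2 * m) → ℝ :=
  fun i ↦ hardWeight K x (finProdFinEquiv.symm i).1 (finProdFinEquiv.symm i).2

lemma hardItem_congr {x : Fin m × Fin n} (h : ∀ t < x.1, K t = K' t) :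
    hardItem K x = hardItem K' x := by
  funext i
  unfold hardItem hardWeight
  split_ifs with _ hlt
  · rfl
  · rw [h _ hlt]
  · rfl

/-- The list of all items, phase by phase. -/
noncomputable def hardInstance (K : Fin m → Fin n) : List (Fin (2 * m) → ℝ) :=
  List.ofFn fun p ↦ hardItem K (finProdFinEquiv.symm p)

/-- The position at which an item stands in `hardInstance`. -/
def position : Fin m × Fin n ↪ ℕ := finProdFinEquiv.toEmbedding.trans Fin.valEmbedding

lemma position_lt (x : Fin m × Fin n) : position x < m * n := (finProdFinEquiv x).isLt

lemma position_lt_succ_phase_mul (x : Fin m × Fin n) : position x < (x.1 + 1) * n := by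
  change (x.2 : ℕ) + n * x.1 < _
  linarith [x.2.isLt]

lemma length_hardInstance : (hardInstance K).length = m * n := List.length_ofFn

lemma getElem?_position_hardInstance (x : Fin m × Fin n) :
    (hardInstance K)[position x]? = some (hardItem K x) := by
  rw [hardInstance, List.getElem?_ofFn, dif_pos (position_lt x)]
  exact congrArg (some <| hardItem K ·) (finProdFinEquiv.symm_apply_apply x)

lemma weightAt_position (x : Fin m × Fin n) (i : Fin (2 * m)) :
    weightAt (fun u ↦ u) (hardInstance K) (position x) i = hardItem K x i := by
  rw [weightAt, getElem?_position_hardInstance, Option.map_some, Option.getD_some]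

lemma apply_mem_Icc_of_mem_hardInstance {u : Fin (2 * m) → ℝ} (hu : u ∈ hardInstance K)
    (i : Fin (2 * m)) : u i ∈ Set.Icc 0 1 := by
  obtain ⟨p, rfl⟩ := List.mem_ofFn.1 hu
  exact ⟨hardWeight_nonneg _ _ _, hardWeight_le_one _ _ _⟩

lemma feasible_map_position_iff {Q : Finset (Fin m × Fin n)} :
    Feasible (fun u ↦ u) (hardInstance K) (Q.map position) ↔ IsPacking K Q := by
  have hindex : ∀ p ∈ Q.map position, p < (hardInstance K).length := by
    simp only [Finset.mem_map, length_hardInstance]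
    rintro _ ⟨x, -, rfl⟩
    exact position_lt x
  simp only [Feasible, Finset.sum_map, weightAt_position]
  refine ⟨fun h s t ↦ ?_, fun h ↦ ⟨hindex, fun i ↦ h _ _⟩⟩
  simpa only [hardItem, Equiv.symm_apply_apply] using h.2 (finProdFinEquiv (s, t))

lemma le_OPT_hardInstance : m ≤ OPT (fun u ↦ u) (hardInstance K) := by
  simpa only [Finset.card_map, card_goodItems] using
    (feasible_map_position_iff.2 (isPacking_goodItems (K := K))).card_le_OPT

/-- The items standing at the positions `P`. -/
noncomputable def itemsAt (m n : ℕ) (P : Finset ℕ) : Finset (Fin m × Fin n) :=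
  P.preimage position position.injective.injOn

lemma mem_itemsAt {P : Finset ℕ} {x : Fin m × Fin n} : x ∈ itemsAt m n P ↔ position x ∈ P :=
  Finset.mem_preimage

lemma map_position_itemsAt {P : Finset ℕ} (hP : ∀ p ∈ P, p < m * n) :
    (itemsAt m n P).map position = P := by
  ext p
  simp only [Finset.mem_map, mem_itemsAt]
  refine ⟨fun ⟨_, hx, hxp⟩ ↦ hxp ▸ hx, fun hp ↦ ?_⟩
  have hpos : position (finProdFinEquiv.symm ⟨p, hP p hp⟩) = p :=
    congrArg Fin.val (finProdFinEquiv.apply_symm_apply _)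
  exact ⟨_, hpos.symm ▸ hp, hpos⟩

lemma isPacking_itemsAt {P : Finset ℕ} (hP : Feasible (fun u ↦ u) (hardInstance K) P) :
    IsPacking K (itemsAt m n P) := by
  rw [← feasible_map_position_iff,
    map_position_itemsAt fun p hp ↦ (hP.1 p hp).trans_eq length_hardInstance]
  exact hP

lemma card_le_of_feasible_hardInstance {P : Finset ℕ}
    (hP : Feasible (fun u ↦ u) (hardInstance K) P) :
    P.card ≤ 1 + (Finset.univ.filter fun t ↦ position (t, K t) ∈ P).card := by
  have hcard : (itemsAt m n P).card = P.card := by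
    rw [← Finset.card_map position,
      map_position_itemsAt fun p hp ↦ (hP.1 p hp).trans_eq length_hardInstance]
  simpa only [hcard, mem_itemsAt] using (isPacking_itemsAt hP).card_le

lemma take_hardInstance_congr {j : Fin m} (h : ∀ t < j, K t = K' t) :
    (hardInstance K).take ((j + 1) * n) = (hardInstance K').take ((j + 1) * n) := by
  refine List.ext_getElem (by simp only [List.length_take, length_hardInstance]) fun p hp _ ↦ ?_
  simp only [hardInstance, List.getElem_take, List.getElem_ofFn]
  refine hardItem_congr fun t ht ↦ h t (ht.trans_le ?_)
  have hp_lt : p < n * (j + 1) := by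
    rw [mul_comm]
    exact (List.length_take_le _ _).trans_lt' hp
  exact Nat.le_of_lt_succ (Nat.div_lt_of_lt_mul hp_lt)

section Algorithm

variable (alg : OnlineAlg fun u : Fin (2 * m) → ℝ ↦ u)

lemma mem_take_of_mem_hardInstance {x : Fin m × Fin n}
    (hx : position x ∈ alg.A (hardInstance K)) :
    position x ∈ alg.A ((hardInstance K).take ((x.1 + 1) * n)) := by
  refine alg.mem_of_isPrefix (List.take_prefix _ _) ?_ hx
  rw [List.length_take, length_hardInstance]
  exact lt_min (position_lt_succ_phase_mul x) (position_lt x)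

lemma good_eq_of_agree_before {j : Fin m} (h : ∀ t < j, K t = K' t)
    (hK : position (j, K j) ∈ alg.A (hardInstance K))
    (hK' : position (j, K' j) ∈ alg.A (hardInstance K')) : K j = K' j := by
  have hkeep := mem_take_of_mem_hardInstance alg hK
  have hkeep' := mem_take_of_mem_hardInstance alg hK'
  rw [← take_hardInstance_congr h] at hkeep'
  have hpack : IsPacking K (itemsAt m n (alg.A ((hardInstance K).take ((j + 1) * n)))) :=
    isPacking_itemsAt ((alg.feasible _).of_isPrefix (List.take_prefix _ _))
  exact congrArg Prod.snd
    (hpack.eq_of_phase_eq (mem_itemsAt.2 hkeep) (mem_itemsAt.2 hkeep') rfl)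

lemma card_filter_good_mem_mul_le (j : Fin m) :
    (Finset.univ.filter fun K : Fin m → Fin n ↦
      position (j, K j) ∈ alg.A (hardInstance K)).card * n ≤ n ^ m := by
  simpa using card_mul_card_le_card_pi
    (Finset.univ.filter fun K : Fin m → Fin n ↦ position (j, K j) ∈ alg.A (hardInstance K)) j
    fun K hK K' hK' hoff ↦ good_eq_of_agree_before alg (fun t ht ↦ hoff t ht.ne)
      (Finset.mem_filter.1 hK).2 (Finset.mem_filter.1 hK').2

lemma sum_card_hardInstance_mul_le :
    (∑ K : Fin m → Fin n, (alg.A (hardInstance K)).card) * n ≤ (n + m) * n ^ m := by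
  have hcount :
      ∑ K : Fin m → Fin n,
          (Finset.univ.filter fun t ↦ position (t, K t) ∈ alg.A (hardInstance K)).card =
        ∑ t, (Finset.univ.filter fun K : Fin m → Fin n ↦
          position (t, K t) ∈ alg.A (hardInstance K)).card :=
    Finset.sum_card_bipartiteAbove_eq_sum_card_bipartiteBelow
      fun K t ↦ position (t, K t) ∈ alg.A (hardInstance K)
  calc (∑ K : Fin m → Fin n, (alg.A (hardInstance K)).card) * n
      ≤ (∑ K : Fin m → Fin n, (1 + (Finset.univ.filter fun t ↦
          position (t, K t) ∈ alg.A (hardInstance K)).card)) * n := by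
        gcongr with K
        exact card_le_of_feasible_hardInstance (alg.feasible _)
    _ = n ^ m * n + ∑ t, (Finset.univ.filter fun K : Fin m → Fin n ↦
          position (t, K t) ∈ alg.A (hardInstance K)).card * n := by
        simp [Finset.sum_add_distrib, hcount, add_mul, Finset.sum_mul]
    _ ≤ n ^ m * n + ∑ _t : Fin m, n ^ m := by
        gcongr with t
        exact card_filter_good_mem_mul_le alg t
    _ = (n + m) * n ^ m := by
        rw [Finset.sum_const, Finset.card_univ, Fintype.card_fin, smul_eq_mul]
        ring

end Algorithm

/-- The hard distribution: each phase has a uniformly random good candidate, independently. -/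
noncomputable def hardDistribution (m n : ℕ) [NeZero n] : PMF (List (Fin (2 * m) → ℝ)) :=
  (PMF.uniformOfFintype (Fin m → Fin n)).map hardInstance

lemma mem_support_hardDistribution_iff [NeZero n] {l : List (Fin (2 * m) → ℝ)} :
    l ∈ (hardDistribution m n).support ↔ ∃ K : Fin m → Fin n, hardInstance K = l := by
  simp [hardDistribution]

lemma expected_card_hardDistribution_le [NeZero n]
    (alg : OnlineAlg fun u : Fin (2 * m) → ℝ ↦ u) :
    ∑' l, hardDistribution m n l * ((alg.A l).card : ℝ≥0∞) ≤ 1 + m / n := by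
  have hn : (n : ℝ≥0∞) ≠ 0 := Nat.cast_ne_zero.2 (NeZero.ne n)
  have hsum : (∑ K : Fin m → Fin n, ((alg.A (hardInstance K)).card : ℝ≥0∞)) * n ≤
      (n + m) * n ^ m := by
    exact_mod_cast sum_card_hardInstance_mul_le alg
  rw [hardDistribution, tsum_map_mul, tsum_uniformOfFintype_mul]
  refine ENNReal.div_le_of_le_mul ?_
  calc ∑ K : Fin m → Fin n, ((alg.A (hardInstance K)).card : ℝ≥0∞)
      ≤ (n + m) * n ^ m / n :=
        (ENNReal.le_div_iff_mul_le (.inl hn) (.inl (ENNReal.natCast_ne_top n))).2 hsum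
    _ = (1 + m / n) * Fintype.card (Fin m → Fin n) := by
        rw [ENNReal.mul_div_right_comm, ENNReal.add_div,
          ENNReal.div_self hn (ENNReal.natCast_ne_top n)]
        simp

end HardInstance

theorem statement2_general (m n : ℕ) [NeZero n] :
    ∃ μ : PMF (List (Fin (2 * m) → ℝ)),
      μ.support.Finite ∧
      (∀ l ∈ μ.support, ∀ u ∈ l, ∀ i : Fin (2 * m), 0 ≤ u i ∧ u i ≤ 1) ∧
      (∀ l ∈ μ.support, m ≤ OPT (fun u : Fin (2 * m) → ℝ => u) l) ∧
      (∀ alg : OnlineAlg (fun u : Fin (2 * m) → ℝ => u),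
        ∑' l, μ l * ((alg.A l).card : ℝ≥0∞) ≤ 1 + m / n) := by
  refine ⟨hardDistribution m n, ?_, ?_, ?_, expected_card_hardDistribution_le⟩
  · exact (Set.finite_range hardInstance).subset fun l hl ↦ mem_support_hardDistribution_iff.1 hl
  · intro l hl u hu
    obtain ⟨K, rfl⟩ := mem_support_hardDistribution_iff.1 hl
    exact apply_mem_Icc_of_mem_hardInstance hu
  · intro l hl
    obtain ⟨K, rfl⟩ := mem_support_hardDistribution_iff.1 hl
    exact le_OPT_hardInstance

/-- Hardness without slack: with `d = 2m` dimensions there is a finitely supported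
distribution over instances, with weight vectors in `[0,1]^d`, whose offline optimum is
always at least `m = d/2`, while every deterministic online algorithm with free disposal
keeps at most `2` items in expectation. Items are identified with their weight vectors. -/
theorem statement2 (m : ℕ) (hm : 1 ≤ m) :
    ∃ μ : PMF (List (Fin (2 * m) → ℝ)),
      μ.support.Finite ∧
      (∀ l ∈ μ.support, ∀ u ∈ l, ∀ i : Fin (2 * m), 0 ≤ u i ∧ u i ≤ 1) ∧
      (∀ l ∈ μ.support, m ≤ OPT (fun u : Fin (2 * m) → ℝ => u) l) ∧
      (∀ alg : OnlineAlg (fun u : Fin (2 * m) → ℝ => u),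
        ∑' l, μ l * ((alg.A l).card : ℝ≥0∞) ≤ 2) := by
  have : NeZero m := ⟨Nat.one_le_iff_ne_zero.1 hm⟩
  simpa only [ENNReal.div_self (NeZero.ne (m : ℝ≥0∞)) (ENNReal.natCast_ne_top m),
    one_add_one_eq_two] using statement2_general m m
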